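/- (Frequency-localized symbol bound) Let P_k(ξ) = φ(1.1^{−k}ξ) be Littlewood–Paley cutoffs built from a smooth radial φ supported in {1/1.04 ≤ |ξ| ≤ 1.04·1.1}. Consider the symbol m(ξ,η_n,η_{n−1}) = P_k(ξ)P_{k_n}(η_n)P_{k_{n+1}}(η_{n−1}−η_n)P_{k_n'}(2η_n−η_{n−1}) / (|ξ|² − |η_n|² − |η_{n−1}−η_n|²) in the regime k_n' ≤ k_n − 10 and |k_{n+1}−k_n| ≤ 2, |k−k_n'| ≤ 2 where the denominator is nonvanishing on the support. Then ‖𝓕⁻¹ m‖_{L¹} ≲ 1.1^{−2k_n}, uniformly in the localization parameters. -/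

import Mathlib

open MeasureTheory Filter
open scoped ENNReal NNReal BigOperators

noncomputable section

abbrev R3 := Fin 3 → ℝ

/-- Fourier transform on ℝ³ with kernel e^{-i x·ξ}. -/
noncomputable def ft (f : R3 → ℂ) (ξ : R3) : ℂ :=
  ∫ x : R3, Complex.exp (-Complex.I * ((∑ i, x i * ξ i : ℝ) : ℂ)) * f x

/-- Inverse Fourier transform on ℝ³. -/
noncomputable def ift (g : R3 → ℂ) (x : R3) : ℂ :=
  (((2 * Real.pi) ^ 3 : ℝ) : ℂ)⁻¹ *
    ∫ ξ : R3, Complex.exp (Complex.I * ((∑ i, x i * ξ i : ℝ) : ℂ)) * g ξ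

/-- Free Schrödinger evolution `e^{itΔ}`, defined on the Fourier side by `e^{-it|ξ|²}`. -/
noncomputable def schrod (t : ℝ) (f : R3 → ℂ) : R3 → ℂ :=
  ift fun ξ => Complex.exp (-Complex.I * (t : ℂ) * ((∑ i, ξ i ^ 2 : ℝ) : ℂ)) * ft f ξ

/-- `L^p` norm on ℝ³. -/
noncomputable def LpN (p : ℝ) (f : R3 → ℂ) : ℝ :=
  (∫ x : R3, ‖f x‖ ^ p) ^ (1 / p)

/-- Mixed norm `L^p_t L^q_x`. -/
noncomputable def LpLqNorm (p q : ℝ) (F : ℝ → R3 → ℂ) : ℝ :=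
  (∫ t : ℝ, ((∫ x : R3, ‖F t x‖ ^ q) ^ (1 / q)) ^ p) ^ (1 / p)

/-- Mixed norm `L^∞_{x_j} L²_{x̃_j, t}`. -/
noncomputable def supL2 (j : Fin 3) (G : R3 → ℝ → ℂ) : ℝ :=
  ⨆ a : ℝ, (∫ p : (Fin 2 → ℝ) × ℝ, ‖G (j.insertNth a p.1) p.2‖ ^ 2) ^ (1/2 : ℝ)

/-- Mixed norm `L¹_{x_j} L²_{t, x̃_j}`. -/
noncomputable def l1L2 (j : Fin 3) (G : R3 → ℝ → ℂ) : ℝ :=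
  ∫ a : ℝ, (∫ p : (Fin 2 → ℝ) × ℝ, ‖G (j.insertNth a p.1) p.2‖ ^ 2) ^ (1/2 : ℝ)

/-- Fractional derivative in direction `j`: Fourier multiplier `|ξ_j|^s`. -/
noncomputable def fracD (s : ℝ) (j : Fin 3) (f : R3 → ℂ) : R3 → ℂ :=
  ift fun ξ => ((|ξ j| ^ s : ℝ) : ℂ) * ft f ξ

/-- `H^{10}` norm defined via the Fourier transform. -/
noncomputable def H10norm (f : R3 → ℂ) : ℝ :=
  (∫ ξ : R3, (1 + ∑ i, ξ i ^ 2) ^ 10 * ‖ft f ξ‖ ^ 2) ^ (1/2 : ℝ)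

/-- Littlewood–Paley projection built from the bump `φ` at scale `1.1^k`. -/
noncomputable def PkP (φ : R3 → ℝ) (k : ℤ) (f : R3 → ℂ) : R3 → ℂ :=
  ift fun ξ => (φ ((1.1 : ℝ) ^ (-k) • ξ) : ℂ) * ft f ξ

/-- The `X` norm: `sup_k ‖∇_ξ (P_k f̂)‖_{L²}`. -/
noncomputable def Xnorm (φ : R3 → ℝ) (f : R3 → ℂ) : ℝ :=
  ⨆ k : ℤ, (∫ ξ : R3,
    ‖fderiv ℝ (fun ζ : R3 => (φ ((1.1 : ℝ) ^ (-k) • ζ) : ℂ) * ft f ζ) ξ‖ ^ 2) ^ (1/2 : ℝ)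

/-- Hypotheses on the Littlewood–Paley bump function: smooth, radial, supported in the
annulus `{1/1.04 ≤ |ξ| ≤ 1.04 × 1.1}`, and forming a partition of unity in dyadic
scales of ratio `1.1`. -/
def LPbump (φ : R3 → ℝ) : Prop :=
  ContDiff ℝ (⊤ : ℕ∞) φ ∧
  (∀ ξ η : R3, (∑ i, ξ i ^ 2) = (∑ i, η i ^ 2) → φ ξ = φ η) ∧
  (∀ ξ : R3, φ ξ ≠ 0 →
    1 / 1.04 ≤ Real.sqrt (∑ i, ξ i ^ 2) ∧ Real.sqrt (∑ i, ξ i ^ 2) ≤ 1.04 * 1.1) ∧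
  (∀ ξ : R3, ξ ≠ 0 → ∑' j : ℤ, φ ((1.1 : ℝ) ^ (-j) • ξ) = 1)

/-- Inverse Fourier transform on ℝ³ × ℝ³ × ℝ³ ≅ ℝ⁹. -/
noncomputable def ift9 (g : R3 × R3 × R3 → ℂ) (x : R3 × R3 × R3) : ℂ :=
  (((2 * Real.pi) ^ 9 : ℝ) : ℂ)⁻¹ *
    ∫ ξ : R3 × R3 × R3, Complex.exp (Complex.I *
      ((∑ i, x.1 i * ξ.1 i + ∑ i, x.2.1 i * ξ.2.1 i + ∑ i, x.2.2 i * ξ.2.2 i : ℝ) : ℂ)) * g ξ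

/-- The Littlewood–Paley cutoff symbol `P_k(ξ) = φ(1.1^{−k}ξ)`. -/
noncomputable def cutoff (φ : R3 → ℝ) (k : ℤ) (ξ : R3) : ℝ := φ ((1.1 : ℝ) ^ (-k) • ξ)

/-!
In the variables `u = 1.1⁻ᵏ ξ`, `v = 1.1^(-kₙ) ηₙ`, `w = 1.1^(-kₙ') (2ηₙ - ηₙ₋₁)` the symbol is
`1.1^(-2kₙ)` times a smooth function of fixed compact support which depends on the localization
parameters only through the ratios of scales `s = 1.1^(k - kₙ)`, `t = 1.1^(kₙ' - kₙ)` and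
`r = 1.1^(kₙ - kₙ₊₁)`. Its denominator `s²|u|² - |v|² - |v - t w|²` is negative on the support,
because `s|u| < |v|` there, so the function is still smooth in `(s, t, r)` up to `s = 0` and
`t = 0`, and the ratios range over a compact set. A compact smooth family of functions supported
in one compact set is bounded in the Schwartz space, and `𝓕⁻¹` maps the Schwartz space continuously
into `L¹`. Finally, the `L¹` norm of `𝓕⁻¹ m` does not change under invertible linear substitutions
in `m`.
-/

open Set Bornology
open scoped ContDiff FourierTransform SchwartzMap Topology

lemma zpow_eq_zpow_mul_zpow_sub {G : Type*} [GroupWithZero G] {c : G} (hc : c ≠ 0) (j l : ℤ) :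
    c ^ j = c ^ l * c ^ (j - l) := by
  rw [← zpow_add₀ hc, add_sub_cancel]

lemma zpow_mem_Icc {c : ℝ} (hc : 1 ≤ c) {j l : ℤ} (h : j ≤ l) : c ^ j ∈ Icc 0 (c ^ l) :=
  ⟨by positivity, zpow_le_zpow_right₀ hc h⟩

lemma norm_le_sqrt_sum_sq {ι : Type*} [Fintype ι] (x : ι → ℝ) : ‖x‖ ≤ √(∑ i, x i ^ 2) :=
  (pi_norm_le_iff_of_nonneg (Real.sqrt_nonneg _)).2 fun i =>
    Real.abs_le_sqrt (Finset.single_le_sum (fun j _ => sq_nonneg (x j)) (Finset.mem_univ i))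

lemma sum_sq_smul {ι : Type*} [Fintype ι] (c : ℝ) (x : ι → ℝ) :
    ∑ i, (c • x) i ^ 2 = c ^ 2 * ∑ i, x i ^ 2 := by
  simp only [Pi.smul_apply, smul_eq_mul, mul_pow, ← Finset.mul_sum]

lemma contDiffAt_div_of_tsupport {𝕜 V : Type*} [NontriviallyNormedField 𝕜]
    [NormedAddCommGroup V] [NormedSpace 𝕜 V] {f g : V → 𝕜} {n : WithTop ℕ∞} {x : V}
    (hf : ContDiffAt 𝕜 n f x) (hg : ContDiffAt 𝕜 n g x) (hne : x ∈ tsupport f → g x ≠ 0) :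
    ContDiffAt 𝕜 n (fun y => f y / g y) x := by
  by_cases hx : x ∈ tsupport f
  · exact hf.div hg (hne hx)
  · have hzero : (fun y => f y / g y) =ᶠ[𝓝 x] fun _ => 0 := by
      filter_upwards [notMem_tsupport_iff_eventuallyEq.1 hx] with y hy
      simp [hy]
    exact contDiffAt_const.congr_of_eventuallyEq hzero

section Slices

variable {P V W E : Type*} [NormedAddCommGroup P] [NormedSpace ℝ P]
  [NormedAddCommGroup V] [NormedSpace ℝ V] [NormedAddCommGroup W] [NormedSpace ℝ W]
  [NormedAddCommGroup E] [NormedSpace ℝ E]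

lemma iteratedFDeriv_comp_continuousLinearMap {f : W → E} {n : ℕ} (g : V →L[ℝ] W) {x : V}
    (hf : ContDiffAt ℝ n f (g x)) :
    iteratedFDeriv ℝ n (f ∘ g) x =
      (iteratedFDeriv ℝ n f (g x)).compContinuousLinearMap fun _ => g := by
  obtain ⟨u, hu, hfu⟩ := hf.contDiffOn (m := n) le_rfl (by simp)
  obtain ⟨s, hsu, hs, hxs⟩ := mem_nhds_iff.1 hu
  have hgs : IsOpen (g ⁻¹' s) := hs.preimage g.continuous
  rw [← iteratedFDerivWithin_of_isOpen n hgs hxs, ← iteratedFDerivWithin_of_isOpen n hs hxs]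
  exact g.iteratedFDerivWithin_comp_right (hfu.mono hsu) hs.uniqueDiffOn hgs.uniqueDiffOn hxs le_rfl

lemma norm_iteratedFDeriv_slice_le {F : P × V → E} {n : ℕ} {p : P} {x : V}
    (hF : ContDiffAt ℝ n F (p, x)) :
    ‖iteratedFDeriv ℝ n (fun y => F (p, y)) x‖ ≤ ‖iteratedFDeriv ℝ n F (p, x)‖ := by
  let i : V →L[ℝ] P × V := .inr ℝ P V
  have hi : (p, (0 : V)) + i x = (p, x) := by simp [i]
  have hslice : (fun y => F (p, y)) = (fun z => F ((p, 0) + z)) ∘ i := by ext; simp [i]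
  have hF' : ContDiffAt ℝ n (fun z => F ((p, 0) + z)) (i x) :=
    ContDiffAt.comp (i x) (by rwa [hi]) (by fun_prop)
  rw [hslice, iteratedFDeriv_comp_continuousLinearMap i hF', iteratedFDeriv_comp_add_left, hi]
  refine (ContinuousMultilinearMap.norm_compContinuousLinearMap_le _ _).trans ?_
  refine mul_le_of_le_one_right (norm_nonneg _) (Finset.prod_le_one (fun _ _ => norm_nonneg _) ?_)
  exact fun _ _ => ContinuousLinearMap.norm_inr_le_one ℝ P V

lemma exists_norm_iteratedFDeriv_slice_le {F : P × V → E} {n : ℕ} {K : Set P} {B : Set V}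
    (hK : IsCompact K) (hB : IsCompact B) (hF : ∀ p ∈ K, ∀ x ∈ B, ContDiffAt ℝ n F (p, x)) :
    ∃ C, ∀ p ∈ K, ∀ x ∈ B, ‖iteratedFDeriv ℝ n (fun y => F (p, y)) x‖ ≤ C := by
  have hcont : ContinuousOn (iteratedFDeriv ℝ n F) (K ×ˢ B) := fun q hq =>
    ((hF q.1 hq.1 q.2 hq.2).continuousAt_iteratedFDeriv le_rfl).continuousWithinAt
  obtain ⟨C, hC⟩ := (hK.prod hB).exists_bound_of_continuousOn hcont
  exact ⟨C, fun p hp x hx => (norm_iteratedFDeriv_slice_le (hF p hp x hx)).trans (hC _ ⟨hp, hx⟩)⟩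

lemma isVonNBounded_schwartzMap_of_tsupport_subset {S : Set 𝓢(V, E)} {B : Set V}
    (hB : IsBounded B) (hS : ∀ f ∈ S, tsupport f ⊆ B)
    (hderiv : ∀ n : ℕ, ∃ C, ∀ f ∈ S, ∀ x ∈ B, ‖iteratedFDeriv ℝ n f x‖ ≤ C) :
    IsVonNBounded ℝ S := by
  refine (schwartz_withSeminorms ℝ V E).isVonNBounded_iff_seminorm_bounded.2 fun ⟨k, n⟩ => ?_
  obtain ⟨C, hC⟩ := hderiv n
  obtain ⟨R, hR⟩ := hB.exists_norm_le
  have hbound : ∀ f ∈ S, ∀ x, ‖x‖ ^ k * ‖iteratedFDeriv ℝ n f x‖ ≤ |R| ^ k * |C| := by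
    intro f hf x
    by_cases hx : x ∈ B
    · gcongr
      · exact (hR x hx).trans (le_abs_self R)
      · exact (hC f hf x hx).trans (le_abs_self C)
    · have hzero : iteratedFDeriv ℝ n f x = 0 := Function.notMem_support.1 fun h =>
        hx (hS f hf (support_iteratedFDeriv_subset n h))
      rw [hzero, norm_zero, mul_zero]
      positivity
  refine ⟨|R| ^ k * |C| + 1, by positivity, fun f hf => ?_⟩
  exact (SchwartzMap.seminorm_le_bound ℝ k n f (by positivity) (hbound f hf)).trans_lt
    (lt_add_one _)

end Slices

lemma integral_eq_abs_det_smul_integral_comp {V E : Type*} [NormedAddCommGroup V]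
    [NormedSpace ℝ V] [FiniteDimensional ℝ V] [MeasurableSpace V] [BorelSpace V]
    [NormedAddCommGroup E] [NormedSpace ℝ E] (μ : Measure V) [μ.IsAddHaarMeasure]
    {T : V →L[ℝ] V} (hT : T.det ≠ 0) (f : V → E) :
    ∫ x, f x ∂μ = |T.det| • ∫ x, f (T x) ∂μ := by
  have hbij : Function.Bijective T := (T.toContinuousLinearEquivOfDetNeZero hT).bijective
  have h := integral_image_eq_integral_abs_det_fderiv_smul μ MeasurableSet.univ
    (fun x _ => T.hasFDerivWithinAt) hbij.1.injOn f
  rwa [image_univ, hbij.2.range_eq, setIntegral_univ, setIntegral_univ, integral_smul] at h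

lemma det_adjoint {V : Type*} [NormedAddCommGroup V] [InnerProductSpace ℝ V]
    [FiniteDimensional ℝ V] (T : V →L[ℝ] V) : (ContinuousLinearMap.adjoint T).det = T.det := by
  let b := stdOrthonormalBasis ℝ V
  have htranspose := LinearMap.toMatrix_adjoint b b (T : V →ₗ[ℝ] V)
  rw [ContinuousLinearMap.adjoint_toLinearMap] at htranspose
  rw [ContinuousLinearMap.det, ContinuousLinearMap.det, ← LinearMap.det_toMatrix b.toBasis,
    ← LinearMap.det_toMatrix b.toBasis, htranspose, Matrix.det_conjTranspose, star_trivial]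

section Fourier

variable {V E : Type*} [NormedAddCommGroup V] [InnerProductSpace ℝ V] [FiniteDimensional ℝ V]
  [MeasurableSpace V] [BorelSpace V] [NormedAddCommGroup E] [NormedSpace ℂ E]

lemma exists_integral_norm_fourierInv_le {S : Set 𝓢(V, E)} (hS : IsVonNBounded ℝ S) :
    ∃ C, ∀ f ∈ S, ∫ w, ‖𝓕⁻ (f : V → E) w‖ ≤ C := by
  let A : 𝓢(V, E) →L[ℝ] Lp E 1 (volume : Measure V) :=
    SchwartzMap.toLpCLM ℝ E 1 volume ∘L FourierTransform.fourierInvCLM ℝ 𝓢(V, E)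
  obtain ⟨C, hC⟩ := ((NormedSpace.isVonNBounded_iff ℝ).1 (hS.image A)).exists_norm_le
  refine ⟨C, fun f hf => ?_⟩
  have hnorm : ‖A f‖ = ∫ w, ‖𝓕⁻ (f : V → E) w‖ := by
    rw [L1.norm_eq_integral_norm]
    refine integral_congr_ae (((𝓕⁻ f).coeFn_toLp 1 volume).fun_comp norm |>.trans ?_)
    rw [SchwartzMap.fourierInv_coe]
    rfl
  exact hnorm ▸ hC _ (mem_image_of_mem A hf)

lemma exists_integral_norm_fourierInv_slice_le {P : Type*} [NormedAddCommGroup P]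
    [NormedSpace ℝ P] {F : P × V → E} {K : Set P} {B : Set V} (hK : IsCompact K)
    (hB : IsCompact B) (hF : ∀ p ∈ K, ∀ x, ContDiffAt ℝ ∞ F (p, x))
    (hsupp : ∀ p ∈ K, ∀ x, F (p, x) ≠ 0 → x ∈ B) :
    ∃ C, ∀ p ∈ K, ∫ w, ‖𝓕⁻ (fun x => F (p, x)) w‖ ≤ C := by
  have htsupp : ∀ p ∈ K, tsupport (fun x => F (p, x)) ⊆ B := fun p hp =>
    closure_minimal (hsupp p hp) hB.isClosed
  have hsmooth : ∀ p ∈ K, ContDiff ℝ ∞ (fun x => F (p, x)) := fun p hp =>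
    contDiff_iff_contDiffAt.2 fun x => (hF p hp x).comp x (by fun_prop)
  have hcompact : ∀ p ∈ K, HasCompactSupport (fun x => F (p, x)) := fun p hp =>
    hB.of_isClosed_subset isClosed_closure (htsupp p hp)
  let f (p : K) : 𝓢(V, E) := (hcompact p p.2).toSchwartzMap (hsmooth p p.2)
  have hf : IsVonNBounded ℝ (range f) := by
    refine isVonNBounded_schwartzMap_of_tsupport_subset hB.isBounded
      (forall_mem_range.2 fun p => htsupp p p.2) fun n => ?_
    obtain ⟨C, hC⟩ := exists_norm_iteratedFDeriv_slice_le (n := n) hK hB fun p hp x _ =>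
      (hF p hp x).of_le (mod_cast le_top)
    exact ⟨C, forall_mem_range.2 fun p => hC p p.2⟩
  obtain ⟨C, hC⟩ := exists_integral_norm_fourierInv_le hf
  exact ⟨C, fun p hp => hC _ ⟨⟨p, hp⟩, rfl⟩⟩

lemma fourierInv_eq_abs_det_smul_fourierInv_comp {T : V →L[ℝ] V} (hT : T.det ≠ 0) (f : V → E)
    (w : V) :
    𝓕⁻ f w = |T.det| • 𝓕⁻ (f ∘ T) (ContinuousLinearMap.adjoint T w) := by
  rw [Real.fourierInv_eq, integral_eq_abs_det_smul_integral_comp volume hT, Real.fourierInv_eq]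
  simp only [Function.comp_apply, ContinuousLinearMap.adjoint_inner_right]

lemma integral_norm_fourierInv_comp {T : V →L[ℝ] V} (hT : T.det ≠ 0) (f : V → E) :
    ∫ w, ‖𝓕⁻ (f ∘ T) w‖ = ∫ w, ‖𝓕⁻ f w‖ := by
  have hT' : (ContinuousLinearMap.adjoint T).det ≠ 0 := by rwa [det_adjoint]
  simp_rw [fourierInv_eq_abs_det_smul_fourierInv_comp hT f, norm_smul, Real.norm_eq_abs, abs_abs]
  rw [integral_const_mul, integral_eq_abs_det_smul_integral_comp volume hT', det_adjoint,
    smul_eq_mul]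

end Fourier

section InverseTransform

/-- `ℝ³ × ℝ³ × ℝ³` with the Euclidean inner product, which the sup norm of `R3 × R3 × R3` does not
carry; the frequency space for Mathlib's inverse Fourier transform. -/
abbrev E9 := EuclideanSpace ℝ (Fin 3 ⊕ Fin 3 ⊕ Fin 3)

/-- Concatenation of three vectors of `ℝ³`, identifying the domain of `ift9` with `E9`. -/
def concatEquiv : (R3 × R3 × R3) ≃L[ℝ] E9 :=
  ((ContinuousLinearEquiv.refl ℝ R3).prodCongr
    (ContinuousLinearEquiv.sumPiEquivProdPi ℝ (Fin 3) (Fin 3) fun _ => ℝ).symm).trans <|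
  (ContinuousLinearEquiv.sumPiEquivProdPi ℝ (Fin 3) (Fin 3 ⊕ Fin 3) fun _ => ℝ).symm.trans
  (PiLp.continuousLinearEquiv 2 ℝ fun _ => ℝ).symm

lemma inner_concatEquiv (x y : R3 × R3 × R3) :
    inner ℝ (concatEquiv x) (concatEquiv y) =
      ∑ i, x.1 i * y.1 i + ∑ i, x.2.1 i * y.2.1 i + ∑ i, x.2.2 i * y.2.2 i := by
  rw [PiLp.inner_apply, Fintype.sum_sum_type, Fintype.sum_sum_type, add_assoc]
  simp only [RCLike.inner_apply, conj_trivial, mul_comm]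
  rfl

lemma measurePreserving_concatEquiv : MeasurePreserving concatEquiv :=
  (PiLp.volume_preserving_toLp _).comp <|
    (volume_measurePreserving_sumPiEquivProdPi_symm fun _ : Fin 3 ⊕ Fin 3 ⊕ Fin 3 => ℝ).comp <|
    (MeasurePreserving.id (volume : Measure R3)).prod
      (volume_measurePreserving_sumPiEquivProdPi_symm fun _ : Fin 3 ⊕ Fin 3 => ℝ)

lemma integral_comp_concatEquiv {E : Type*} [NormedAddCommGroup E] [NormedSpace ℝ E] (f : E9 → E) :
    ∫ x, f (concatEquiv x) = ∫ y, f y :=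
  measurePreserving_concatEquiv.integral_comp concatEquiv.toHomeomorph.measurableEmbedding f

lemma ift9_eq_fourierInv (g : R3 × R3 × R3 → ℂ) (x : R3 × R3 × R3) :
    ift9 g x =
      (((2 * Real.pi) ^ 9 : ℝ) : ℂ)⁻¹ *
        𝓕⁻ (g ∘ concatEquiv.symm) ((2 * Real.pi)⁻¹ • concatEquiv x) := by
  rw [ift9, Real.fourierInv_eq', ← integral_comp_concatEquiv]
  congr 2 with ξ
  have hphase : 2 * Real.pi * inner ℝ (concatEquiv ξ) ((2 * Real.pi)⁻¹ • concatEquiv x) =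
      inner ℝ (concatEquiv x) (concatEquiv ξ) := by
    rw [inner_smul_right, mul_inv_cancel_left₀ (by positivity), real_inner_comm]
  rw [hphase, inner_concatEquiv, mul_comm Complex.I, Function.comp_apply,
    ContinuousLinearEquiv.symm_apply_apply, smul_eq_mul]

lemma integral_norm_ift9 (g : R3 × R3 × R3 → ℂ) :
    ∫ x, ‖ift9 g x‖ = ∫ y, ‖𝓕⁻ (g ∘ concatEquiv.symm) y‖ := by
  have hdim : Module.finrank ℝ E9 = 9 := by simp
  have hpi : 0 < (2 * Real.pi) ^ 9 := by positivity
  simp_rw [ift9_eq_fourierInv, norm_mul, norm_inv, Complex.norm_real]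
  rw [integral_const_mul,
    integral_comp_concatEquiv fun y => ‖𝓕⁻ (g ∘ concatEquiv.symm) ((2 * Real.pi)⁻¹ • y)‖,
    Measure.integral_comp_smul volume fun y => ‖𝓕⁻ (g ∘ concatEquiv.symm) y‖, hdim, inv_pow,
    inv_inv, smul_eq_mul, Real.norm_eq_abs, inv_mul_cancel_left₀ (abs_pos.2 hpi.ne').ne']

lemma integral_norm_ift9_comp (T : (R3 × R3 × R3) ≃L[ℝ] R3 × R3 × R3) (g : R3 × R3 × R3 → ℂ) :
    ∫ x, ‖ift9 (g ∘ T) x‖ = ∫ x, ‖ift9 g x‖ := by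
  let T' : E9 ≃L[ℝ] E9 := concatEquiv.symm.trans (T.trans concatEquiv)
  have hT' : (T' : E9 →L[ℝ] E9).det ≠ 0 := T'.toLinearEquiv.isUnit_det'.ne_zero
  have hconj : (g ∘ T) ∘ concatEquiv.symm = (g ∘ concatEquiv.symm) ∘ T' := by ext; simp [T']
  rw [integral_norm_ift9, integral_norm_ift9, hconj]
  exact integral_norm_fourierInv_comp hT' _

lemma integral_norm_ift9_smul (c : ℝ) (g : R3 × R3 × R3 → ℂ) :
    ∫ x, ‖ift9 (c • g) x‖ = |c| * ∫ x, ‖ift9 g x‖ := by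
  have hsmul (x : R3 × R3 × R3) : ift9 (c • g) x = c • ift9 g x := by
    simp only [ift9, Pi.smul_apply, mul_smul_comm, integral_smul]
  simp_rw [hsmul, norm_smul]
  rw [integral_const_mul, Real.norm_eq_abs]

lemma exists_integral_norm_ift9_slice_le {P : Type*} [NormedAddCommGroup P] [NormedSpace ℝ P]
    {F : P × R3 × R3 × R3 → ℂ} {K : Set P} {B : Set (R3 × R3 × R3)} (hK : IsCompact K)
    (hB : IsCompact B) (hF : ∀ p ∈ K, ∀ x, ContDiffAt ℝ ∞ F (p, x))
    (hsupp : ∀ p ∈ K, ∀ x, F (p, x) ≠ 0 → x ∈ B) :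
    ∃ C, ∀ p ∈ K, ∫ x, ‖ift9 (fun y => F (p, y)) x‖ ≤ C := by
  simp_rw [integral_norm_ift9]
  refine exists_integral_norm_fourierInv_slice_le (F := fun q => F (q.1, concatEquiv.symm q.2)) hK
    (hB.image concatEquiv.continuous) (fun p hp y => ?_) fun p hp y hy => ?_
  · exact (hF p hp (concatEquiv.symm y)).comp (p, y)
      (contDiff_fst.prodMk (concatEquiv.symm.contDiff.comp contDiff_snd)).contDiffAt
  · exact ⟨concatEquiv.symm y, hsupp p hp _ hy, concatEquiv.apply_symm_apply y⟩

end InverseTransform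

section Symbol

/-- The symbol `m(ξ, ηₙ, ηₙ₋₁)`; the components of the argument are `ξ`, `ηₙ`, `ηₙ₋₁`. -/
def symbol (φ : R3 → ℝ) (k kn kn1 kn' : ℤ) (z : R3 × R3 × R3) : ℂ :=
  ((cutoff φ k z.1 * cutoff φ kn z.2.1 * cutoff φ kn1 (z.2.2 - z.2.1) *
    cutoff φ kn' ((2 : ℝ) • z.2.1 - z.2.2) : ℝ) : ℂ) /
  (((∑ i, z.1 i ^ 2) - (∑ i, z.2.1 i ^ 2) - (∑ i, (z.2.2 i - z.2.1 i) ^ 2) : ℝ) : ℂ)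

/-- The numerator of `symbol` in the variables `u = 1.1⁻ᵏ ξ`, `v = 1.1^(-kₙ) ηₙ` and
`w = 1.1^(-kₙ') (2ηₙ - ηₙ₋₁)`. The parameters `(s, t, r)` stand for the ratios of scales
`1.1^(k - kₙ)`, `1.1^(kₙ' - kₙ)`, `1.1^(kₙ - kₙ₊₁)`. -/
def rescaledNumerator (φ : R3 → ℝ) : (ℝ × ℝ × ℝ) × R3 × R3 × R3 → ℝ :=
  fun ((_, t, r), u, v, w) => φ u * φ v * φ (r • (v - t • w)) * φ w

/-- The denominator of `symbol`, divided by `1.1^(2kₙ)`, in the variables and parameters of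
`rescaledNumerator`. -/
def rescaledDenominator : (ℝ × ℝ × ℝ) × R3 × R3 × R3 → ℝ :=
  fun ((s, t, _), u, v, w) =>
    s ^ 2 * ∑ i, u i ^ 2 - ∑ i, v i ^ 2 - ∑ i, (v i - t * w i) ^ 2

/-- The symbol rescaled to unit frequencies: it depends on the localization parameters only through
the ratios `(s, t, r)` of `rescaledNumerator`, which stay in a compact set. -/
def rescaledSymbol (φ : R3 → ℝ) (q : (ℝ × ℝ × ℝ) × R3 × R3 × R3) : ℝ :=
  rescaledNumerator φ q / rescaledDenominator q

/-- The change of variables `(u, v, w) ↦ (1.1ᵏ u, 1.1ˡ v, 2 · 1.1ˡ v - 1.1ᵐ w)`, which for `l = kₙ`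
and `m = kₙ'` expresses `(ξ, ηₙ, ηₙ₋₁)` through the rescaled frequencies. -/
def frequencyScaling (k l m : ℤ) : (R3 × R3 × R3) ≃L[ℝ] R3 × R3 × R3 :=
  let c : ℝˣ := Units.mk0 1.1 (by norm_num)
  (ContinuousLinearEquiv.smulLeft (c ^ k)).prodCongr <|
    (ContinuousLinearEquiv.smulLeft (c ^ l)).skewProd (ContinuousLinearEquiv.smulLeft (-c ^ m))
      ((2 * (c ^ l : ℝˣ) : ℝ) • .id ℝ R3)

lemma frequencyScaling_fst (k l m : ℤ) (x : R3 × R3 × R3) :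
    (frequencyScaling k l m x).1 = (1.1 : ℝ) ^ k • x.1 := by
  ext; simp [frequencyScaling, Units.smul_def, -map_zpow]

lemma frequencyScaling_snd_fst (k l m : ℤ) (x : R3 × R3 × R3) :
    (frequencyScaling k l m x).2.1 = (1.1 : ℝ) ^ l • x.2.1 := by
  ext; simp [frequencyScaling, Units.smul_def, -map_zpow]

lemma two_smul_frequencyScaling_sub (k l m : ℤ) (x : R3 × R3 × R3) :
    (2 : ℝ) • (frequencyScaling k l m x).2.1 - (frequencyScaling k l m x).2.2 =
      (1.1 : ℝ) ^ m • x.2.2 := by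
  ext
  simp only [frequencyScaling, Units.val_zpow_eq_zpow_val, Units.val_mk0,
    ContinuousLinearEquiv.prodCongr_apply, ContinuousLinearEquiv.smulLeft_apply_apply,
    Units.smul_def, ContinuousLinearEquiv.skewProd_apply, Units.val_neg, neg_smul, smul_apply,
    ContinuousLinearMap.id_apply, Pi.sub_apply, Pi.smul_apply, smul_eq_mul, Pi.add_apply,
    Pi.neg_apply]
  ring

lemma frequencyScaling_snd_snd_sub_snd_fst (k l m : ℤ) (x : R3 × R3 × R3) :
    (frequencyScaling k l m x).2.2 - (frequencyScaling k l m x).2.1 =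
      (1.1 : ℝ) ^ l • (x.2.1 - (1.1 : ℝ) ^ (m - l) • x.2.2) := by
  rw [smul_sub, smul_smul, ← zpow_eq_zpow_mul_zpow_sub (by norm_num),
    ← two_smul_frequencyScaling_sub k l m x, ← frequencyScaling_snd_fst k l m x]
  module

lemma cutoff_smul (φ : R3 → ℝ) (j l : ℤ) (ξ : R3) :
    cutoff φ j ((1.1 : ℝ) ^ l • ξ) = φ ((1.1 : ℝ) ^ (l - j) • ξ) := by
  rw [cutoff, smul_smul, ← zpow_add₀ (by norm_num), neg_add_eq_sub]

lemma symbol_comp_frequencyScaling (φ : R3 → ℝ) (k kn kn1 kn' : ℤ) :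
    symbol φ k kn kn1 kn' ∘ frequencyScaling k kn kn' =
      (1.1 : ℝ) ^ (-(2 * kn)) • fun x => (rescaledSymbol φ
        (((1.1 : ℝ) ^ (k - kn), (1.1 : ℝ) ^ (kn' - kn), (1.1 : ℝ) ^ (kn - kn1)), x) : ℂ) := by
  ext x
  let p : ℝ × ℝ × ℝ := ((1.1 : ℝ) ^ (k - kn), (1.1 : ℝ) ^ (kn' - kn), (1.1 : ℝ) ^ (kn - kn1))
  let z := frequencyScaling k kn kn' x
  have hnum : cutoff φ k z.1 * cutoff φ kn z.2.1 * cutoff φ kn1 (z.2.2 - z.2.1) *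
      cutoff φ kn' ((2 : ℝ) • z.2.1 - z.2.2) = rescaledNumerator φ (p, x) := by
    rw [frequencyScaling_snd_snd_sub_snd_fst, two_smul_frequencyScaling_sub, frequencyScaling_fst,
      frequencyScaling_snd_fst]
    simp only [cutoff_smul, sub_self, zpow_zero, one_smul, rescaledNumerator, p]
  have hden : ∑ i, z.1 i ^ 2 - ∑ i, z.2.1 i ^ 2 - ∑ i, (z.2.2 - z.2.1) i ^ 2 =
      (1.1 ^ kn) ^ 2 * rescaledDenominator (p, x) := by
    rw [frequencyScaling_snd_snd_sub_snd_fst, frequencyScaling_fst, frequencyScaling_snd_fst,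
      zpow_eq_zpow_mul_zpow_sub (by norm_num) k kn, sum_sq_smul, sum_sq_smul, sum_sq_smul, mul_pow]
    simp only [rescaledDenominator, p, Pi.sub_apply, Pi.smul_apply, smul_eq_mul]
    ring
  have hscale : (1.1 : ℝ) ^ (-(2 * kn)) = ((1.1 ^ kn) ^ 2)⁻¹ := by
    rw [zpow_neg, mul_comm, zpow_mul, zpow_ofNat]
  calc symbol φ k kn kn1 kn' z
      = ((rescaledNumerator φ (p, x) / ((1.1 ^ kn) ^ 2 * rescaledDenominator (p, x)) : ℝ) : ℂ) := by
        rw [← hnum, ← hden, Complex.ofReal_div]; rfl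
    _ = (1.1 : ℝ) ^ (-(2 * kn)) • (rescaledSymbol φ (p, x) : ℂ) := by
        rw [hscale, rescaledSymbol, ← div_div, Complex.real_smul, ← Complex.ofReal_mul,
          div_right_comm, inv_mul_eq_div]

variable {φ : R3 → ℝ} {a b σ : ℝ}

lemma rescaledDenominator_neg {q : (ℝ × ℝ × ℝ) × R3 × R3 × R3} (hs : q.1.1 ∈ Icc 0 σ)
    (hu : √(∑ i, q.2.1 i ^ 2) ≤ b) (hv : a ≤ √(∑ i, q.2.2.1 i ^ 2)) (hσ : σ * b < a) :
    rescaledDenominator q < 0 := by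
  obtain ⟨⟨s, t, r⟩, u, v, w⟩ := q
  have hlt : s * √(∑ i, u i ^ 2) < √(∑ i, v i ^ 2) :=
    calc s * √(∑ i, u i ^ 2) ≤ σ * b := mul_le_mul hs.2 hu (by positivity) (hs.1.trans hs.2)
      _ < a := hσ
      _ ≤ √(∑ i, v i ^ 2) := hv
  have hsq := pow_lt_pow_left₀ hlt (mul_nonneg hs.1 (by positivity)) two_ne_zero
  rw [mul_pow, Real.sq_sqrt (by positivity), Real.sq_sqrt (by positivity)] at hsq
  have hlast : 0 ≤ ∑ i, (v i - t * w i) ^ 2 := by positivity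
  simp only [rescaledDenominator]
  linarith

lemma contDiffAt_rescaledSymbol (hφ : ContDiff ℝ ∞ φ)
    (hsupp : ∀ ξ, φ ξ ≠ 0 → a ≤ √(∑ i, ξ i ^ 2) ∧ √(∑ i, ξ i ^ 2) ≤ b)
    {q : (ℝ × ℝ × ℝ) × R3 × R3 × R3} (hs : q.1.1 ∈ Icc 0 σ) (hσ : σ * b < a) :
    ContDiffAt ℝ ∞ (rescaledSymbol φ) q := by
  have hnum : ContDiff ℝ ∞ (rescaledNumerator φ) := by
    unfold rescaledNumerator; fun_prop
  have hden : ContDiff ℝ ∞ rescaledDenominator := by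
    unfold rescaledDenominator; fun_prop
  refine contDiffAt_div_of_tsupport hnum.contDiffAt hden.contDiffAt fun hq => ?_
  have hclosed : IsClosed {p : (ℝ × ℝ × ℝ) × R3 × R3 × R3 |
      √(∑ i, p.2.1 i ^ 2) ≤ b ∧ a ≤ √(∑ i, p.2.2.1 i ^ 2)} :=
    (isClosed_le (by fun_prop) continuous_const).and (isClosed_le continuous_const (by fun_prop))
  have hannuli : tsupport (rescaledNumerator φ) ⊆ _ := closure_minimal (fun p hp => by
    simp only [Function.mem_support, rescaledNumerator, mul_ne_zero_iff] at hp
    exact ⟨(hsupp _ hp.1.1.1).2, (hsupp _ hp.1.1.2).1⟩) hclosed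
  exact (rescaledDenominator_neg hs (hannuli hq).1 (hannuli hq).2 hσ).ne

lemma mem_closedBall_of_rescaledSymbol_ne_zero (hsupp : ∀ ξ, φ ξ ≠ 0 → √(∑ i, ξ i ^ 2) ≤ b)
    {p : ℝ × ℝ × ℝ} {x : R3 × R3 × R3} (hx : rescaledSymbol φ (p, x) ≠ 0) :
    x ∈ Metric.closedBall 0 b := by
  have hball (ξ : R3) (hξ : φ ξ ≠ 0) : ‖ξ‖ ≤ b := (norm_le_sqrt_sum_sq ξ).trans (hsupp ξ hξ)
  have hnum := (div_ne_zero_iff.1 hx).1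
  simp only [rescaledNumerator, mul_ne_zero_iff] at hnum
  obtain ⟨⟨⟨hu, hv⟩, -⟩, hw⟩ := hnum
  exact mem_closedBall_zero_iff.2 (max_le (hball _ hu) (max_le (hball _ hv) (hball _ hw)))

lemma exists_integral_norm_ift9_rescaledSymbol_le (hφ : ContDiff ℝ ∞ φ)
    (hsupp : ∀ ξ, φ ξ ≠ 0 → a ≤ √(∑ i, ξ i ^ 2) ∧ √(∑ i, ξ i ^ 2) ≤ b) (hσ : σ * b < a)
    (τ ρ : ℝ) :
    ∃ C, ∀ p ∈ Icc 0 σ ×ˢ Icc 0 τ ×ˢ Icc 0 ρ,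
      ∫ x, ‖ift9 (fun y => (rescaledSymbol φ (p, y) : ℂ)) x‖ ≤ C := by
  refine exists_integral_norm_ift9_slice_le (F := fun q => (rescaledSymbol φ q : ℂ))
    (isCompact_Icc.prod (isCompact_Icc.prod isCompact_Icc)) (isCompact_closedBall 0 b)
    (fun p hp x => ?_) fun p _ x hx => ?_
  · exact Complex.ofRealCLM.contDiff.contDiffAt.comp (p, x)
      (contDiffAt_rescaledSymbol hφ hsupp hp.1 hσ)
  · exact mem_closedBall_of_rescaledSymbol_ne_zero (fun ξ hξ => (hsupp ξ hξ).2)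
      (Complex.ofReal_ne_zero.1 hx)

end Symbol

theorem stmt17_general {φ : R3 → ℝ} {a b : ℝ} {N M : ℤ} (hφ : ContDiff ℝ ∞ φ)
    (hsupp : ∀ ξ, φ ξ ≠ 0 → a ≤ √(∑ i, ξ i ^ 2) ∧ √(∑ i, ξ i ^ 2) ≤ b)
    (hN : (1.1 : ℝ) ^ (-N) * b < a) :
    ∃ C > 0, ∀ k kn kn1 kn' : ℤ, k ≤ kn - N → kn' ≤ kn + M → kn ≤ kn1 + M →
      ∫ x, ‖ift9 (symbol φ k kn kn1 kn') x‖ ≤ C * (1.1 : ℝ) ^ (-(2 * kn)) := by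
  obtain ⟨C, hC⟩ := exists_integral_norm_ift9_rescaledSymbol_le hφ hsupp hN
    ((1.1 : ℝ) ^ M) ((1.1 : ℝ) ^ M)
  refine ⟨max C 1, by positivity, fun k kn kn1 kn' hk hkn' hkn => ?_⟩
  have hratios : ((1.1 : ℝ) ^ (k - kn), (1.1 : ℝ) ^ (kn' - kn), (1.1 : ℝ) ^ (kn - kn1)) ∈
      Icc 0 ((1.1 : ℝ) ^ (-N)) ×ˢ Icc 0 ((1.1 : ℝ) ^ M) ×ˢ Icc 0 ((1.1 : ℝ) ^ M) :=
    ⟨zpow_mem_Icc (by norm_num) (by lia), zpow_mem_Icc (by norm_num) (by lia),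
      zpow_mem_Icc (by norm_num) (by lia)⟩
  rw [← integral_norm_ift9_comp (frequencyScaling k kn kn'), symbol_comp_frequencyScaling,
    integral_norm_ift9_smul, abs_of_pos (by positivity), mul_comm]
  gcongr
  exact (hC _ hratios).trans (le_max_left C 1)

/-- frequency-localized symbol bound: for the symbol
`m(ξ,η_n,η_{n−1}) = P_k(ξ)P_{k_n}(η_n)P_{k_{n+1}}(η_{n−1}−η_n)P_{k_n'}(2η_n−η_{n−1})
/ (|ξ|²−|η_n|²−|η_{n−1}−η_n|²)` in the regime `k_n' ≤ k_n − 10`, `|k_{n+1}−k_n| ≤ 2`,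
`|k−k_n'| ≤ 2` with nonvanishing denominator on the support,
one has `‖𝓕⁻¹m‖_{L¹} ≲ 1.1^{−2k_n}` uniformly in the localization parameters. -/
theorem stmt17 (φ : R3 → ℝ) (hφ : LPbump φ) :
    ∃ C > 0, ∀ k kn kn1 kn' : ℤ,
      kn' ≤ kn - 10 → |kn1 - kn| ≤ 2 → |k - kn'| ≤ 2 →
      (∀ ξ ηn ηm : R3,
        cutoff φ k ξ * cutoff φ kn ηn * cutoff φ kn1 (ηm - ηn) *
          cutoff φ kn' ((2 : ℝ) • ηn - ηm) ≠ 0 →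
        (∑ i, ξ i ^ 2) - (∑ i, ηn i ^ 2) - (∑ i, (ηm i - ηn i) ^ 2) ≠ 0) →
      (∫ x : R3 × R3 × R3, ‖ift9 (fun z =>
          ((cutoff φ k z.1 * cutoff φ kn z.2.1 * cutoff φ kn1 (z.2.2 - z.2.1) *
            cutoff φ kn' ((2 : ℝ) • z.2.1 - z.2.2) : ℝ) : ℂ) /
          (((∑ i, z.1 i ^ 2) - (∑ i, z.2.1 i ^ 2) -
            (∑ i, (z.2.2 i - z.2.1 i) ^ 2) : ℝ) : ℂ)) x‖) ≤
        C * (1.1 : ℝ) ^ (-(2 * kn)) := by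
  obtain ⟨C, hC, h⟩ := stmt17_general (N := 8) (M := 2) hφ.1 hφ.2.2.1 (by norm_num)
  refine ⟨C, hC, fun k kn kn1 kn' hsep hkn1 hk _ => ?_⟩
  rw [abs_le] at hkn1 hk
  exact h k kn kn1 kn' (by lia) (by lia) (by lia)
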